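/- The elements a^p, b^p and h^p − h are central in T(v). -/

import Mathlib

/-!
If `g x = x (g + c)` with `c` a scalar, then `f(g) x^k = x^k f(g + k c)` for every polynomial `f`
(`aeval_mul_pow`). In characteristic `p` this makes `x^p` commute with `g`, because `p c = 0`.
If moreover `y x = v(g)` and `x y = v(g - c)`, then
`y x^p = v(g) x^(p-1) = x^(p-1) v(g - c) = x^p y`.
Taking `(x, y, g, c)` to be `(a, b, h, 1)` and `(b, a, h - 1, -1)` shows that `a^p` and `b^p`
commute with the three generators. Finally `f = X^p - X` satisfies `f(X + c) = f(X)` for `c = ±1`,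
so `f(h)` commutes with `a` and `b`.
-/

/-!
The algebra `T(v)` of Hodges: the quotient of the free algebra `K⟨a,b,h⟩` by the two-sided
ideal generated by `ha − ah − a`, `hb − bh + b`, `ba − v(h)`, `ab − v(h−1)`.
We realise it as a `RingQuot` of the free algebra on three generators
(`0 ↦ a`, `1 ↦ b`, `2 ↦ h`).
-/

open Polynomial

noncomputable section

/-- the generator `a` of the free algebra `K⟨a,b,h⟩` -/
def fa (K : Type) [Field K] : FreeAlgebra K (Fin 3) := FreeAlgebra.ι K 0

/-- the generator `b` of the free algebra `K⟨a,b,h⟩` -/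
def fb (K : Type) [Field K] : FreeAlgebra K (Fin 3) := FreeAlgebra.ι K 1

/-- the generator `h` of the free algebra `K⟨a,b,h⟩` -/
def fh (K : Type) [Field K] : FreeAlgebra K (Fin 3) := FreeAlgebra.ι K 2

/-- The defining relations of `T(v)`. -/
inductive TvRel (K : Type) [Field K] (v : K[X]) :
    FreeAlgebra K (Fin 3) → FreeAlgebra K (Fin 3) → Prop
  | ha : TvRel K v (fh K * fa K) (fa K * (fh K + 1))
  | hb : TvRel K v (fh K * fb K) (fb K * (fh K - 1))
  | ba : TvRel K v (fb K * fa K) (aeval (fh K) v)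
  | ab : TvRel K v (fa K * fb K) (aeval (fh K - 1) v)

/-- Hodges' algebra `T(v)`. -/
abbrev Tv (K : Type) [Field K] (v : K[X]) := RingQuot (TvRel K v)

/-- the image of `a` in `T(v)` -/
def Ta (K : Type) [Field K] (v : K[X]) : Tv K v := RingQuot.mkAlgHom K (TvRel K v) (fa K)

/-- the image of `b` in `T(v)` -/
def Tb (K : Type) [Field K] (v : K[X]) : Tv K v := RingQuot.mkAlgHom K (TvRel K v) (fb K)

/-- the image of `h` in `T(v)` -/
def Th (K : Type) [Field K] (v : K[X]) : Tv K v := RingQuot.mkAlgHom K (TvRel K v) (fh K)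

theorem aeval_mul_of_shift {K A : Type*} [Field K] [Ring A] [Algebra K A] {g g' x : A}
    (hx : g * x = x * g') (f : K[X]) : aeval g f * x = x * aeval g' f := by
  induction f using Polynomial.induction_on' with
  | add f₁ f₂ h₁ h₂ => simp only [map_add, add_mul, mul_add, h₁, h₂]
  | monomial k r =>
    have hpow : SemiconjBy x (g' ^ k) (g ^ k) :=
      SemiconjBy.pow_right (show SemiconjBy x g' g from hx.symm) k
    rw [aeval_monomial, aeval_monomial, mul_assoc, ← hpow.eq, Algebra.left_comm]

theorem mul_pow_of_shift {K A : Type*} [Field K] [Ring A] [Algebra K A] {g x : A} {c : K}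
    (hx : g * x = x * (g + algebraMap K A c)) (k : ℕ) :
    g * x ^ k = x ^ k * (g + algebraMap K A (k * c)) := by
  induction k with
  | zero => simp
  | succ k ih =>
    rw [pow_succ, ← mul_assoc, ih, mul_assoc, add_mul, hx, Algebra.commutes, ← mul_add, mul_assoc,
      add_assoc, ← map_add]
    congr 4
    push_cast
    ring

theorem aeval_mul_pow {K A : Type*} [Field K] [Ring A] [Algebra K A] {g x : A} {c : K}
    (hx : g * x = x * (g + algebraMap K A c)) (k : ℕ) (f : K[X]) :
    aeval g f * x ^ k = x ^ k * aeval (g + algebraMap K A (k * c)) f :=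
  aeval_mul_of_shift (mul_pow_of_shift hx k) f

theorem commute_pow_char {K A : Type*} [Field K] [Ring A] [Algebra K A] (p : ℕ) [CharP K p]
    {g x : A} {c : K} (hx : g * x = x * (g + algebraMap K A c)) : Commute (x ^ p) g := by
  have := mul_pow_of_shift hx p
  rw [CharP.cast_eq_zero, zero_mul, map_zero, add_zero] at this
  exact this.symm

theorem commute_pow_char_of_mul {K A : Type*} [Field K] [Ring A] [Algebra K A] (p : ℕ)
    [Fact p.Prime] [CharP K p] {g x y : A} {c : K} {v : K[X]}
    (hx : g * x = x * (g + algebraMap K A c)) (hyx : y * x = aeval g v)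
    (hxy : x * y = aeval (g - algebraMap K A c) v) : Commute (x ^ p) y := by
  obtain ⟨q, rfl⟩ : ∃ q, p = q + 1 :=
    ⟨p - 1, (Nat.succ_pred_prime Fact.out).symm⟩
  have hq : (q : K) * c = -c := by
    have : ((q + 1 : ℕ) : K) = 0 := CharP.cast_eq_zero K (q + 1)
    push_cast at this
    linear_combination c * this
  have key := aeval_mul_pow hx q v
  rw [hq, map_neg, ← sub_eq_add_neg, ← hxy, ← hyx] at key
  calc x ^ (q + 1) * y = x ^ q * (x * y) := by rw [pow_succ, mul_assoc]
    _ = y * x * x ^ q := key.symm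
    _ = y * x ^ (q + 1) := by rw [pow_succ', mul_assoc]

theorem commute_artin_schreier {K A : Type*} [Field K] [Ring A] [Algebra K A] (p : ℕ)
    [Fact p.Prime] [CharP K p] {g x : A} {c : K} (hc : c ^ p = c)
    (hx : g * x = x * (g + algebraMap K A c)) : Commute (g ^ p - g) x := by
  have key := aeval_mul_of_shift hx (X ^ p - X : K[X])
  -- The Frobenius identity is applied in `K[X]`, since `A` may be trivial or noncommutative.
  have hshift : (X + C c) ^ p - (X + C c) = (X ^ p - X : K[X]) := by
    rw [add_pow_char, ← C_pow, hc]
    ring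
  have hs := congrArg (aeval g) hshift
  simp only [map_sub, map_pow, map_add, aeval_X, aeval_C] at key hs
  rw [hs] at key
  exact key

theorem mem_center_Tv {K : Type} [Field K] {v : K[X]} {z : Tv K v} (ha : Commute z (Ta K v))
    (hb : Commute z (Tb K v)) (hh : Commute z (Th K v)) : z ∈ Subalgebra.center K (Tv K v) := by
  rw [Subalgebra.mem_center_iff]
  intro w
  obtain ⟨w, rfl⟩ := RingQuot.mkAlgHom_surjective K (TvRel K v) w
  suffices h : Commute z (RingQuot.mkAlgHom K (TvRel K v) w) from h.symm.eq
  induction w using FreeAlgebra.induction with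
  | grade0 r => rw [AlgHom.commutes]; exact (Algebra.commutes r z).symm
  | grade1 i => fin_cases i <;> assumption
  | mul u w hu hw => rw [map_mul]; exact hu.mul_right hw
  | add u w hu hw => rw [map_add]; exact hu.add_right hw

/-!
STATEMENT 3: The elements `a^p`, `b^p` and `h^p − h` are central in `T(v)`.
Here `K` is algebraically closed of characteristic `p` with `p` and `n` coprime,
and `v` is monic of degree `n` with all roots in the prime subfield `F_p`
(i.e. every root of `v` is the image of a natural number).
-/

theorem statement_3 (K : Type) [Field K] (p n : ℕ) [Fact p.Prime] [CharP K p]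
    [IsAlgClosed K] (hn : 0 < n) (hpn : Nat.Coprime p n)
    (v : K[X]) (hmonic : v.Monic) (hdeg : v.natDegree = n)
    (hroots : ∀ x : K, v.IsRoot x → ∃ m : ℕ, (m : K) = x) :
    Ta K v ^ p ∈ Subalgebra.center K (Tv K v) ∧
    Tb K v ^ p ∈ Subalgebra.center K (Tv K v) ∧
    Th K v ^ p - Th K v ∈ Subalgebra.center K (Tv K v) := by
  have rha : Th K v * Ta K v = Ta K v * (Th K v + algebraMap K _ 1) := by
    simpa [Ta, Th] using RingQuot.mkAlgHom_rel K (TvRel.ha (K := K) (v := v))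
  have rhb : Th K v * Tb K v = Tb K v * (Th K v + algebraMap K _ (-1)) := by
    simpa [Tb, Th, sub_eq_add_neg] using RingQuot.mkAlgHom_rel K (TvRel.hb (K := K) (v := v))
  have rba : Tb K v * Ta K v = aeval (Th K v) v := by
    have := RingQuot.mkAlgHom_rel K (TvRel.ba (K := K) (v := v))
    rwa [map_mul, ← aeval_algHom_apply] at this
  have rab : Ta K v * Tb K v = aeval (Th K v - 1) v := by
    have := RingQuot.mkAlgHom_rel K (TvRel.ab (K := K) (v := v))
    rwa [map_mul, ← aeval_algHom_apply, map_sub, map_one] at this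
  have rgb : (Th K v - 1) * Tb K v = Tb K v * (Th K v - 1 + algebraMap K _ (-1)) := by
    rw [sub_mul, rhb, sub_add_eq_add_sub, mul_sub, one_mul, mul_one]
  refine ⟨mem_center_Tv (Commute.pow_self _ _) ?_ (commute_pow_char p rha),
    mem_center_Tv ?_ (Commute.pow_self _ _) (commute_pow_char p rhb),
    mem_center_Tv (commute_artin_schreier p (one_pow p) rha)
      (commute_artin_schreier p ?_ rhb)
      ((Commute.pow_self _ _).sub_left (Commute.refl _))⟩
  · exact commute_pow_char_of_mul p rha rba (by rw [map_one]; exact rab)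
  · exact commute_pow_char_of_mul p rgb rab (by
      rw [map_neg, map_one, sub_neg_eq_add, sub_add_cancel]; exact rba)
  · have := sub_pow_char (p := p) (0 : K) 1
    simpa [(Fact.out : p.Prime).ne_zero] using this
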